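/- arXiv:2510.25900 — 3 statements merged into one kernel-verified Lean document; each statement's English description precedes it below -/
import Mathlib

section
/- (Dichotomy for L₁.) Let (d_j)_{j≥1} be strictly positive reals and m ≥ 1 an integer, and set L₁(M;δ) = ∫_0^∞ [1 − ∏_{j=1}^M (1 − S_m(d_j u) e^{−d_j u})] du. Then lim_{M→∞} L₁(M;δ) < ∞ if and only if there exists ξ > 0 such that ∑_{j=1}^∞ e^{−d_j ξ} < ∞; equivalently, lim_{M→∞} L₁(M;δ) = ∞ if and only if ∑_{j=1}^∞ e^{−d_j ξ} = ∞ for every ξ > 0. -/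
/-!
The factor `S_m(y) e^{-y}` is the tail of a rate-one Erlang distribution, so `L₁(M)` is the expected
maximum of `M` independent Erlang variables with rates `d_j`.

If `∑ e^{-d_j ξ} < ∞`, the union bound is applied only beyond time `2ξ`: the expectation is at most
`2ξ + ∑_j ∫_{2ξ}^∞ S_m(d_j u) e^{-d_j u} du`. Since `S_m(y) = O(e^{y/2})`, the `j`-th summand is
`O(e^{-d_j ξ} / d_j)`, and `d_j → ∞`, so the bound is uniform in `M`.

If `∑ e^{-d_j u} = ∞` for every `u > 0`, then `∏ (1 - S_m(d_j u) e^{-d_j u}) ≤ exp (-∑ e^{-d_j u})`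
tends to zero, so the integrand tends to one on a half-line of infinite measure.
-/

open MeasureTheory Filter

/-- `Sm m y` is the `m`-th partial sum of the exponential series. -/
noncomputable def Sm (m : ℕ) (y : ℝ) : ℝ := ∑ i ∈ Finset.range m, y ^ i / (Nat.factorial i)

/-- `L1 m d M = ∫_0^∞ [1 − ∏_{j=1}^M (1 − S_m(d_j u) e^{−d_j u})] du`. -/
noncomputable def L1 (m : ℕ) (d : ℕ → ℝ) (M : ℕ) : ℝ :=
  ∫ u in Set.Ioi (0 : ℝ),
    (1 - ∏ j ∈ Finset.Icc 1 M, (1 - Sm m (d j * u) * Real.exp (-(d j * u))))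

open Set Topology

/-- The probability that at least one of the independent events of probabilities `a j`, `j ∈ s`,
occurs. For tail probabilities `a j = ℙ(T j > u)` it is the tail of the maximum of the `T j`. -/
noncomputable def unionProb {ι : Type*} (a : ι → ℝ) (s : Finset ι) : ℝ :=
  1 - ∏ j ∈ s, (1 - a j)

section UnionProb

variable {ι : Type*} {a : ι → ℝ}

lemma unionProb_le_one (ha : ∀ j, a j ≤ 1) (s : Finset ι) : unionProb a s ≤ 1 :=
  sub_le_self _ (Finset.prod_nonneg fun j _ => sub_nonneg.2 (ha j))

lemma unionProb_mono (ha : ∀ j, a j ∈ Icc 0 1) : Monotone (unionProb a) := by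
  classical
  intro s t hst
  have hfactor (j : ι) : 0 ≤ 1 - a j ∧ 1 - a j ≤ 1 :=
    ⟨sub_nonneg.2 (ha j).2, sub_le_self _ (ha j).1⟩
  refine sub_le_sub_left ?_ 1
  rw [← Finset.prod_sdiff hst]
  exact mul_le_of_le_one_left (Finset.prod_nonneg fun j _ => (hfactor j).1)
    (Finset.prod_le_one (fun j _ => (hfactor j).1) fun j _ => (hfactor j).2)

lemma unionProb_nonneg (ha : ∀ j, a j ∈ Icc 0 1) (s : Finset ι) : 0 ≤ unionProb a s := by
  simpa [unionProb] using unionProb_mono ha s.empty_subset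

lemma unionProb_insert [DecidableEq ι] {s : Finset ι} {j : ι} (hj : j ∉ s) :
    unionProb a (insert j s) = a j * (1 - unionProb a s) + unionProb a s := by
  simp only [unionProb, Finset.prod_insert hj]
  ring

lemma unionProb_le_sum (ha : ∀ j, a j ∈ Icc 0 1) (s : Finset ι) :
    unionProb a s ≤ ∑ j ∈ s, a j := by
  classical
  induction s using Finset.induction_on with
  | empty => simp [unionProb]
  | insert j s hj ih =>
    rw [unionProb_insert hj, Finset.sum_insert hj]
    have hs : 1 - unionProb a s ≤ 1 := sub_le_self _ (unionProb_nonneg ha s)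
    exact add_le_add (mul_le_of_le_one_right (ha j).1 hs) ih

lemma one_sub_exp_neg_sum_le_unionProb (ha : ∀ j, a j ≤ 1) (s : Finset ι) :
    1 - Real.exp (-∑ j ∈ s, a j) ≤ unionProb a s := by
  rw [unionProb, ← Finset.sum_neg_distrib, Real.exp_sum]
  exact sub_le_sub_left (Finset.prod_le_prod (fun j _ => sub_nonneg.2 (ha j))
    fun j _ => Real.one_sub_le_exp_neg (a j)) 1

lemma tendsto_unionProb_range_nhds_one {a : ℕ → ℝ} (ha : ∀ j, a j ∈ Icc 0 1)
    (hsum : ¬ Summable a) :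
    Tendsto (fun M => unionProb a (Finset.range M)) atTop (𝓝 1) := by
  have hpartial := (not_summable_iff_tendsto_nat_atTop_of_nonneg fun j => (ha j).1).1 hsum
  have hlower : Tendsto (fun M => 1 - Real.exp (-∑ j ∈ Finset.range M, a j)) atTop (𝓝 1) := by
    simpa using (Real.tendsto_exp_neg_atTop_nhds_zero.comp hpartial).const_sub 1
  exact tendsto_of_tendsto_of_tendsto_of_le_of_le hlower tendsto_const_nhds
    (fun M => one_sub_exp_neg_sum_le_unionProb (fun j => (ha j).2) _)
    fun M => unionProb_le_one (fun j => (ha j).2) _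

end UnionProb

section Integral

variable {ι α : Type*} [MeasurableSpace α] {μ : Measure α} {F : ι → α → ℝ}

lemma aestronglyMeasurable_unionProb (hmeas : ∀ j, AEStronglyMeasurable (F j) μ)
    (s : Finset ι) : AEStronglyMeasurable (fun x => unionProb (F · x) s) μ :=
  aestronglyMeasurable_const.sub (s.aestronglyMeasurable_fun_prod fun j _ =>
    aestronglyMeasurable_const.sub (hmeas j))

lemma integrable_unionProb (hF : ∀ᵐ x ∂μ, ∀ j, F j x ∈ Icc 0 1)
    (hint : ∀ j, Integrable (F j) μ) (s : Finset ι) :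
    Integrable (fun x => unionProb (F · x) s) μ := by
  refine (integrable_finsetSum s fun j _ => hint j).mono'
    (aestronglyMeasurable_unionProb (fun j => (hint j).aestronglyMeasurable) s) ?_
  filter_upwards [hF] with x hx
  rw [Real.norm_of_nonneg (unionProb_nonneg hx s)]
  exact unionProb_le_sum hx s

lemma monotone_integral_unionProb (hF : ∀ᵐ x ∂μ, ∀ j, F j x ∈ Icc 0 1)
    (hint : ∀ j, Integrable (F j) μ) :
    Monotone fun s : Finset ι => ∫ x, unionProb (F · x) s ∂μ := fun s t hst =>
  integral_mono_ae (integrable_unionProb hF hint s) (integrable_unionProb hF hint t)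
    (hF.mono fun _ hx => unionProb_mono hx hst)

lemma integral_unionProb_le_measureReal_add_sum (hF : ∀ᵐ x ∂μ, ∀ j, F j x ∈ Icc 0 1)
    (hint : ∀ j, Integrable (F j) μ) {A : Set α} (hA : MeasurableSet A) (hμA : μ A ≠ ⊤)
    (s : Finset ι) :
    ∫ x, unionProb (F · x) s ∂μ ≤ μ.real A + ∑ j ∈ s, ∫ x in Aᶜ, F j x ∂μ := by
  have hU := integrable_unionProb hF hint s
  have hon : ∫ x in A, unionProb (F · x) s ∂μ ≤ μ.real A := by
    have hone : IntegrableOn (fun _ => (1 : ℝ)) A μ := integrableOn_const hμA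
    simpa using integral_mono_ae hU.integrableOn hone
      (ae_restrict_of_ae (hF.mono fun x hx => unionProb_le_one (fun j => (hx j).2) s))
  have hoff : ∫ x in Aᶜ, unionProb (F · x) s ∂μ ≤ ∑ j ∈ s, ∫ x in Aᶜ, F j x ∂μ := by
    rw [← integral_finsetSum s fun j _ => (hint j).integrableOn]
    exact integral_mono_ae hU.integrableOn (integrable_finsetSum s fun j _ => (hint j).integrableOn)
      (ae_restrict_of_ae (hF.mono fun x hx => unionProb_le_sum hx s))
  rw [← integral_add_compl hA hU]
  exact add_le_add hon hoff

lemma tendsto_setIntegral_unionProb {F : ℕ → α → ℝ} (hF : ∀ᵐ x ∂μ, ∀ j, F j x ∈ Icc 0 1)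
    (hmeas : ∀ j, AEStronglyMeasurable (F j) μ) (hsum : ∀ᵐ x ∂μ, ¬ Summable (F · x))
    {A : Set α} (hμA : μ A ≠ ⊤) :
    Tendsto (fun M => ∫ x in A, unionProb (F · x) (Finset.range M) ∂μ) atTop (𝓝 (μ.real A)) := by
  have hone : IntegrableOn (fun _ => (1 : ℝ)) A μ := integrableOn_const hμA
  have hbound (M : ℕ) : ∀ᵐ x ∂μ.restrict A, ‖unionProb (F · x) (Finset.range M)‖ ≤ 1 := by
    filter_upwards [ae_restrict_of_ae hF] with x hx
    rw [Real.norm_of_nonneg (unionProb_nonneg hx _)]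
    exact unionProb_le_one (fun j => (hx j).2) _
  have hlim : ∀ᵐ x ∂μ.restrict A,
      Tendsto (fun M => unionProb (F · x) (Finset.range M)) atTop (𝓝 1) := by
    filter_upwards [ae_restrict_of_ae hF, ae_restrict_of_ae hsum] with x hx hsx
    exact tendsto_unionProb_range_nhds_one hx hsx
  simpa using tendsto_integral_of_dominated_convergence (fun _ => (1 : ℝ))
    (fun M => (aestronglyMeasurable_unionProb hmeas _).restrict) hone hbound hlim

lemma tendsto_integral_unionProb_atTop [SigmaFinite μ] (hμ : μ univ = ⊤) {F : ℕ → α → ℝ}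
    (hF : ∀ᵐ x ∂μ, ∀ j, F j x ∈ Icc 0 1) (hint : ∀ j, Integrable (F j) μ)
    (hsum : ∀ᵐ x ∂μ, ¬ Summable (F · x)) :
    Tendsto (fun M => ∫ x, unionProb (F · x) (Finset.range M) ∂μ) atTop atTop := by
  refine tendsto_atTop.2 fun b => ?_
  obtain ⟨A, -, -, hbA, hμA⟩ := Measure.exists_subset_measure_lt_top (μ := μ) MeasurableSet.univ
    (hμ ▸ ENNReal.ofReal_lt_top : ENNReal.ofReal b < μ univ)
  have hb : b < μ.real A := lt_of_not_ge fun h => hbA.not_ge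
    ((ENNReal.le_ofReal_iff_toReal_le hμA.ne (measureReal_nonneg.trans h)).2 h)
  have hlim := tendsto_setIntegral_unionProb hF (fun j => (hint j).aestronglyMeasurable) hsum hμA.ne
  filter_upwards [hlim.eventually (lt_mem_nhds hb)] with M hM
  exact hM.le.trans (setIntegral_le_integral (integrable_unionProb hF hint _)
    (hF.mono fun x hx => unionProb_nonneg hx _))

end Integral

/-- The tail probability `ℙ(T > y) = S_m(y) e^{-y}` of a sum `T` of `m` independent exponential
variables of rate one. -/
noncomputable def erlangTail (m : ℕ) (y : ℝ) : ℝ := Sm m y * Real.exp (-y)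

section ErlangTail

variable {m : ℕ} {y : ℝ}

@[fun_prop]
lemma continuous_erlangTail (m : ℕ) : Continuous (erlangTail m) := by
  unfold erlangTail Sm
  fun_prop

lemma erlangTail_mem_Icc (m : ℕ) (hy : 0 ≤ y) : erlangTail m y ∈ Icc 0 1 := by
  refine ⟨by unfold erlangTail Sm; positivity, ?_⟩
  rw [erlangTail, Real.exp_neg, ← div_eq_mul_inv, div_le_one (Real.exp_pos y)]
  exact Real.sum_le_exp_of_nonneg hy m

lemma one_le_Sm (hm : 1 ≤ m) (hy : 0 ≤ y) : 1 ≤ Sm m y := by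
  have h : y ^ 0 / (Nat.factorial 0 : ℝ) ≤ Sm m y :=
    Finset.single_le_sum (f := fun i => y ^ i / (Nat.factorial i : ℝ))
      (fun i _ => by positivity) (Finset.mem_range.2 hm)
  simpa using h

lemma exp_neg_le_erlangTail (hm : 1 ≤ m) (hy : 0 ≤ y) : Real.exp (-y) ≤ erlangTail m y :=
  le_mul_of_one_le_left (Real.exp_pos _).le (one_le_Sm hm hy)

lemma Sm_le_mul_exp (m : ℕ) {t : ℝ} (ht : 0 < t) (hy : 0 ≤ y) :
    Sm m y ≤ (∑ i ∈ Finset.range m, t⁻¹ ^ i) * Real.exp (t * y) := by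
  rw [Finset.sum_mul]
  refine Finset.sum_le_sum fun i _ => ?_
  calc y ^ i / (Nat.factorial i : ℝ)
      = t⁻¹ ^ i * ((t * y) ^ i / (Nat.factorial i : ℝ)) := by
        rw [mul_pow, inv_pow]
        field_simp
    _ ≤ t⁻¹ ^ i * Real.exp (t * y) := by
        gcongr
        exact Real.pow_div_factorial_le_exp _ (by positivity) i

lemma erlangTail_le_mul_exp_neg (m : ℕ) {t : ℝ} (ht : 0 < t) (hy : 0 ≤ y) :
    erlangTail m y ≤ (∑ i ∈ Finset.range m, t⁻¹ ^ i) * Real.exp (-(1 - t) * y) := by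
  calc erlangTail m y
      ≤ (∑ i ∈ Finset.range m, t⁻¹ ^ i) * Real.exp (t * y) * Real.exp (-y) :=
        mul_le_mul_of_nonneg_right (Sm_le_mul_exp m ht hy) (Real.exp_pos _).le
    _ = (∑ i ∈ Finset.range m, t⁻¹ ^ i) * Real.exp (-(1 - t) * y) := by
        rw [mul_assoc, ← Real.exp_add]
        ring_nf

lemma erlangTail_mul_le_mul_exp_neg (m : ℕ) {r u : ℝ} (hr : 0 ≤ r) (hu : 0 ≤ u) :
    erlangTail m (r * u) ≤ (∑ i ∈ Finset.range m, (2 : ℝ) ^ i) * Real.exp (-(r / 2) * u) := by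
  convert erlangTail_le_mul_exp_neg m (t := 1 / 2) (by norm_num) (mul_nonneg hr hu) using 3
  · norm_num
  · ring

lemma integrableOn_erlangTail_mul (m : ℕ) {r : ℝ} (hr : 0 < r) :
    IntegrableOn (fun u => erlangTail m (r * u)) (Ioi 0) := by
  refine ((integrableOn_exp_mul_Ioi (show -(r / 2) < 0 by linarith) 0).const_mul
    (∑ i ∈ Finset.range m, (2 : ℝ) ^ i)).mono' (by fun_prop) ?_
  filter_upwards [self_mem_ae_restrict measurableSet_Ioi] with u hu
  rw [Real.norm_of_nonneg (erlangTail_mem_Icc m (mul_pos hr hu).le).1]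
  exact erlangTail_mul_le_mul_exp_neg m hr.le (le_of_lt hu)

lemma setIntegral_erlangTail_mul_nonneg (m : ℕ) {r T : ℝ} (hr : 0 ≤ r) (hT : 0 ≤ T) :
    0 ≤ ∫ u in Ioi T, erlangTail m (r * u) :=
  setIntegral_nonneg measurableSet_Ioi fun _ hu =>
    (erlangTail_mem_Icc m (mul_nonneg hr (hT.trans (le_of_lt hu)))).1

lemma setIntegral_erlangTail_mul_le (m : ℕ) {r T : ℝ} (hr : 0 < r) (hT : 0 ≤ T) :
    ∫ u in Ioi T, erlangTail m (r * u) ≤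
      (∑ i ∈ Finset.range m, (2 : ℝ) ^ i) * (2 * (Real.exp (-(r / 2 * T)) / r)) := by
  have hrate : -(r / 2) < 0 := by linarith
  calc ∫ u in Ioi T, erlangTail m (r * u)
      ≤ ∫ u in Ioi T, (∑ i ∈ Finset.range m, (2 : ℝ) ^ i) * Real.exp (-(r / 2) * u) :=
        setIntegral_mono_on ((integrableOn_erlangTail_mul m hr).mono_set (Ioi_subset_Ioi hT))
          ((integrableOn_exp_mul_Ioi hrate T).const_mul _) measurableSet_Ioi
          fun u hu => erlangTail_mul_le_mul_exp_neg m hr.le (hT.trans (le_of_lt hu))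
    _ = (∑ i ∈ Finset.range m, (2 : ℝ) ^ i) * (2 * (Real.exp (-(r / 2 * T)) / r)) := by
        rw [integral_const_mul, integral_exp_mul_Ioi hrate, neg_mul]
        field_simp

end ErlangTail

section Rates

variable {ι : Type*} {r : ι → ℝ} {ξ : ℝ}

lemma tendsto_cofinite_atTop_of_summable_exp_neg_mul (hξ : 0 < ξ)
    (hsum : Summable fun j => Real.exp (-(r j * ξ))) : Tendsto r cofinite atTop := by
  have h := Real.tendsto_exp_comp_nhds_zero.1 hsum.tendsto_cofinite_zero
  exact (tendsto_mul_const_atTop_of_pos hξ).1 (tendsto_neg_atBot_iff.1 h)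

lemma summable_exp_neg_mul_div (hξ : 0 < ξ) (hsum : Summable fun j => Real.exp (-(r j * ξ))) :
    Summable fun j => Real.exp (-(r j * ξ)) / r j := by
  refine .of_norm_bounded_eventually hsum ?_
  filter_upwards [(tendsto_cofinite_atTop_of_summable_exp_neg_mul hξ hsum).eventually_ge_atTop 1]
    with j hj
  rw [Real.norm_of_nonneg (by positivity)]
  exact div_le_self (Real.exp_pos _).le hj

lemma summable_setIntegral_erlangTail_mul (m : ℕ) (hr : ∀ j, 0 < r j) (hξ : 0 < ξ)
    (hsum : Summable fun j => Real.exp (-(r j * ξ))) :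
    Summable fun j => ∫ u in Ioi (2 * ξ), erlangTail m (r j * u) := by
  have hT : 0 ≤ 2 * ξ := by positivity
  refine .of_nonneg_of_le (fun j => setIntegral_erlangTail_mul_nonneg m (hr j).le hT) (fun j => ?_)
    (((summable_exp_neg_mul_div hξ hsum).mul_left 2).mul_left
      (∑ i ∈ Finset.range m, (2 : ℝ) ^ i))
  convert setIntegral_erlangTail_mul_le m (hr j) hT using 6
  ring

lemma ae_erlangTail_mem_Icc (m : ℕ) (hr : ∀ j, 0 < r j) :
    ∀ᵐ u ∂volume.restrict (Ioi 0), ∀ j, erlangTail m (r j * u) ∈ Icc 0 1 := by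
  filter_upwards [self_mem_ae_restrict measurableSet_Ioi] with u hu j
  exact erlangTail_mem_Icc m (mul_pos (hr j) hu).le

lemma bddAbove_range_integral_unionProb_erlangTail (m : ℕ) (hr : ∀ j, 0 < r j) (hξ : 0 < ξ)
    (hsum : Summable fun j => Real.exp (-(r j * ξ))) :
    BddAbove (range fun s : Finset ι =>
      ∫ u in Ioi 0, unionProb (fun j => erlangTail m (r j * u)) s) := by
  have hT : 0 ≤ 2 * ξ := by positivity
  have hbeyond :
      (volume.restrict (Ioi 0)).restrict (Iic (2 * ξ))ᶜ = volume.restrict (Ioi (2 * ξ)) := by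
    rw [Measure.restrict_restrict measurableSet_Iic.compl, compl_Iic,
      inter_eq_left.2 (Ioi_subset_Ioi hT)]
  have hfinite : volume.restrict (Ioi 0) (Iic (2 * ξ)) ≠ ⊤ := by
    rw [Measure.restrict_apply measurableSet_Iic, inter_comm, Ioi_inter_Iic]
    exact measure_Ioc_lt_top.ne
  refine ⟨(volume.restrict (Ioi 0)).real (Iic (2 * ξ)) +
    ∑' j, ∫ u in Ioi (2 * ξ), erlangTail m (r j * u), ?_⟩
  rintro _ ⟨s, rfl⟩
  refine (integral_unionProb_le_measureReal_add_sum (ae_erlangTail_mem_Icc m hr)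
    (fun j => integrableOn_erlangTail_mul m (hr j)) measurableSet_Iic hfinite s).trans ?_
  rw [hbeyond]
  exact add_le_add_right ((summable_setIntegral_erlangTail_mul m hr hξ hsum).sum_le_tsum s
    fun j _ => setIntegral_erlangTail_mul_nonneg m (hr j).le hT) _

lemma tendsto_integral_unionProb_erlangTail_atTop {m : ℕ} (hm : 1 ≤ m) {r : ℕ → ℝ}
    (hr : ∀ j, 0 < r j) (hsum : ∀ ξ > 0, ¬ Summable fun j => Real.exp (-(r j * ξ))) :
    Tendsto (fun M => ∫ u in Ioi 0,
      unionProb (fun j => erlangTail m (r j * u)) (Finset.range M)) atTop atTop := by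
  refine tendsto_integral_unionProb_atTop (by simp) (ae_erlangTail_mem_Icc m hr)
    (fun j => integrableOn_erlangTail_mul m (hr j)) ?_
  filter_upwards [self_mem_ae_restrict measurableSet_Ioi] with u hu htail
  exact hsum u hu (.of_nonneg_of_le (fun j => (Real.exp_pos _).le)
    (fun j => exp_neg_le_erlangTail hm (mul_pos (hr j) hu).le) htail)

end Rates

lemma L1_eq_integral_unionProb (m : ℕ) (d : ℕ → ℝ) (M : ℕ) :
    L1 m d M = ∫ u in Ioi 0,
      unionProb (fun j => erlangTail m (d (j + 1) * u)) (Finset.range M) := by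
  refine integral_congr_ae (.of_forall fun u => congrArg (1 - ·) ?_)
  rw [Finset.range_eq_Ico, Finset.prod_Ico_add' (fun j => 1 - erlangTail m (d j * u)) 0 M 1]
  rfl

section L1

variable {d : ℕ → ℝ}

lemma monotone_L1 (m : ℕ) (hd : ∀ j, 1 ≤ j → 0 < d j) : Monotone (L1 m d) := by
  have hr (j : ℕ) : 0 < d (j + 1) := hd (j + 1) (by lia)
  intro M N hMN
  simp only [L1_eq_integral_unionProb]
  exact monotone_integral_unionProb (ae_erlangTail_mem_Icc m hr)
    (fun j => integrableOn_erlangTail_mul m (hr j)) (Finset.range_mono hMN)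

lemma bddAbove_range_L1 (m : ℕ) (hd : ∀ j, 1 ≤ j → 0 < d j) {ξ : ℝ} (hξ : 0 < ξ)
    (hsum : Summable fun j => Real.exp (-(d j * ξ))) : BddAbove (range (L1 m d)) := by
  refine (bddAbove_range_integral_unionProb_erlangTail m (fun j => hd (j + 1) (by lia)) hξ
    ((summable_nat_add_iff 1).2 hsum)).mono ?_
  rintro _ ⟨M, rfl⟩
  exact ⟨Finset.range M, (L1_eq_integral_unionProb m d M).symm⟩

lemma tendsto_L1_atTop {m : ℕ} (hm : 1 ≤ m) (hd : ∀ j, 1 ≤ j → 0 < d j)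
    (hsum : ∀ ξ > 0, ¬ Summable fun j => Real.exp (-(d j * ξ))) :
    Tendsto (L1 m d) atTop atTop := by
  simp only [funext (L1_eq_integral_unionProb m d)]
  exact tendsto_integral_unionProb_erlangTail_atTop hm (fun j => hd (j + 1) (by lia))
    fun ξ hξ h => hsum ξ hξ ((summable_nat_add_iff 1).1 h)

end L1

theorem L1_dichotomy
    (m : ℕ) (hm : 1 ≤ m) (d : ℕ → ℝ) (hd : ∀ j, 1 ≤ j → 0 < d j) :
    ((∃ L : ℝ, Tendsto (fun M => L1 m d M) atTop (nhds L)) ↔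
      ∃ ξ > (0 : ℝ), Summable (fun j => Real.exp (-(d j * ξ)))) ∧
    (Tendsto (fun M => L1 m d M) atTop atTop ↔
      ∀ ξ > (0 : ℝ), ¬ Summable (fun j => Real.exp (-(d j * ξ)))) := by
  have hconv : (∃ ξ > (0 : ℝ), Summable fun j => Real.exp (-(d j * ξ))) →
      ∃ L : ℝ, Tendsto (L1 m d) atTop (𝓝 L) := fun ⟨_, hξ, hsum⟩ =>
    ⟨_, tendsto_atTop_ciSup (monotone_L1 m hd) (bddAbove_range_L1 m hd hξ hsum)⟩
  have hdiv : (¬ ∃ ξ > (0 : ℝ), Summable fun j => Real.exp (-(d j * ξ))) →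
      Tendsto (L1 m d) atTop atTop := fun hsum =>
    tendsto_L1_atTop hm hd fun ξ hξ h => hsum ⟨ξ, hξ, h⟩
  have hexcl : (∃ L : ℝ, Tendsto (L1 m d) atTop (𝓝 L)) → ¬ Tendsto (L1 m d) atTop atTop :=
    fun ⟨L, hL⟩ h => not_tendsto_nhds_of_tendsto_atTop h L hL
  exact ⟨⟨fun h => not_not.1 fun hsum => hexcl h (hdiv hsum), hconv⟩,
    fun h ξ hξ hsum => hexcl (hconv ⟨ξ, hξ, hsum⟩) h, tendsto_L1_atTop hm hd⟩
end

section
/- Let f satisfy the stated regularity conditions, let d_j = 1/f(j), m ≥ 1 an integer, and set L₁(M;δ) = ∫_0^∞ [1 − ∏_{j=1}^M (1 − S_m(d_j u) e^{−d_j u})] du. Then, as M → ∞, L₁(M;δ) ∼ f(M) · ln(f(M)/f′(M)). -/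
open MeasureTheory Filter

/-!
`L1 m d M` is the mean of the maximum of independent Erlang variables with shape `m` and rates
`d j = 1 / f j`. The expected number of them exceeding `B` is, up to powers of `B`, the sum
`∑ j ≤ M, exp (-B / f j)`. At `B = c λ f(M)`, with `λ = log (f(M) / f'(M))`, Laplace's method
evaluates this sum as `exp ((1 - c) λ) / (c λ)` up to constant factors: it explodes if `c < 1` and
stays bounded if `c > 1`, so the maximum concentrates around `λ f(M)`. Laplace's method rests on
the approximate primitive `f² / (f' B) · exp (-B / f)` of `exp (-B / f)`, whose derivative is
`exp (-B / f) (1 + f (2 - f'' f / f'²) / B)`.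
-/

open scoped Topology

section Erlang

/-- The survival function `y ↦ S_m(y) e^{-y}` of the Erlang distribution with shape `m` and
rate `1`. -/
noncomputable def erlangSurvival (m : ℕ) (y : ℝ) : ℝ := Sm m y * Real.exp (-y)

variable {m : ℕ} {k y : ℝ}

lemma continuous_erlangSurvival : Continuous (erlangSurvival m) := by
  unfold erlangSurvival Sm
  fun_prop

lemma erlangSurvival_nonneg (hy : 0 ≤ y) : 0 ≤ erlangSurvival m y := by
  unfold erlangSurvival Sm
  positivity

lemma erlangSurvival_le_one (hy : 0 ≤ y) : erlangSurvival m y ≤ 1 := by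
  rw [erlangSurvival, Real.exp_neg, ← div_eq_mul_inv, div_le_one (Real.exp_pos y)]
  exact Real.sum_le_exp_of_nonneg hy m

lemma exp_neg_le_erlangSurvival (hm : 1 ≤ m) (hy : 0 ≤ y) :
    Real.exp (-y) ≤ erlangSurvival m y := by
  have one_le_Sm : 1 ≤ Sm m y := by
    simpa [Sm] using Finset.single_le_sum (f := fun i : ℕ => y ^ i / (Nat.factorial i : ℝ))
      (fun i _ => by positivity) (Finset.mem_range.2 hm)
  exact le_mul_of_one_le_left (Real.exp_nonneg _) one_le_Sm

lemma exists_erlangSurvival_le (m : ℕ) (hk : k < 1) :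
    ∃ C, 0 ≤ C ∧ ∀ y, 0 ≤ y → erlangSurvival m y ≤ C * Real.exp (-(k * y)) := by
  have := sub_pos.2 hk
  refine ⟨∑ i ∈ Finset.range m, ((1 - k) ^ i)⁻¹, by positivity, fun y hy => ?_⟩
  have Sm_le : Sm m y ≤ (∑ i ∈ Finset.range m, ((1 - k) ^ i)⁻¹) * Real.exp ((1 - k) * y) := by
    rw [Sm, Finset.sum_mul]
    refine Finset.sum_le_sum fun i _ => ?_
    rw [inv_mul_eq_div, le_div_iff₀' (by positivity), ← mul_div_assoc, ← mul_pow]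
    exact Real.pow_div_factorial_le_exp _ (by positivity) i
  calc erlangSurvival m y
      ≤ (∑ i ∈ Finset.range m, ((1 - k) ^ i)⁻¹) * Real.exp ((1 - k) * y) * Real.exp (-y) := by
        unfold erlangSurvival; gcongr
    _ = (∑ i ∈ Finset.range m, ((1 - k) ^ i)⁻¹) * Real.exp (-(k * y)) := by
        rw [mul_assoc, ← Real.exp_add]; ring_nf

end Erlang

lemma one_sub_prod_one_sub_le_sum {ι R : Type*} [CommRing R] [LinearOrder R]
    [IsStrictOrderedRing R] {s : Finset ι} {q : ι → R} (h0 : ∀ j ∈ s, 0 ≤ q j)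
    (h1 : ∀ j ∈ s, q j ≤ 1) : 1 - ∏ j ∈ s, (1 - q j) ≤ ∑ j ∈ s, q j := by
  classical
  induction s using Finset.induction_on with
  | empty => simp
  | insert i s hi ih =>
    rw [Finset.forall_mem_insert] at h0 h1
    rw [Finset.prod_insert hi, Finset.sum_insert hi]
    have prod_le_one : ∏ j ∈ s, (1 - q j) ≤ 1 :=
      Finset.prod_le_one (fun j hj => sub_nonneg.2 (h1.2 j hj))
        fun j hj => sub_le_self 1 (h0.2 j hj)
    calc 1 - (1 - q i) * ∏ j ∈ s, (1 - q j)
        = q i * ∏ j ∈ s, (1 - q j) + (1 - ∏ j ∈ s, (1 - q j)) := by ring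
      _ ≤ q i + ∑ j ∈ s, q j :=
        add_le_add (mul_le_of_le_one_right h0.1 prod_le_one) (ih h0.2 h1.2)

section MaxErlang

variable {ι : Type*}

/-- The survival function of the maximum of independent Erlang variables with shape `m` and
rates `d j`, `j ∈ s`; it is the integrand of `L1`. -/
noncomputable def maxErlangSurvival (m : ℕ) (s : Finset ι) (d : ι → ℝ) (u : ℝ) : ℝ :=
  1 - ∏ j ∈ s, (1 - erlangSurvival m (d j * u))

variable {m : ℕ} {s : Finset ι} {d : ι → ℝ} {C k c u : ℝ}

lemma continuous_maxErlangSurvival : Continuous (maxErlangSurvival m s d) := by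
  have := continuous_erlangSurvival (m := m)
  unfold maxErlangSurvival
  fun_prop

lemma maxErlangSurvival_le_one (hd : ∀ j ∈ s, 0 ≤ d j) (hu : 0 ≤ u) :
    maxErlangSurvival m s d u ≤ 1 :=
  sub_le_self 1 <| Finset.prod_nonneg fun j hj =>
    sub_nonneg.2 (erlangSurvival_le_one (mul_nonneg (hd j hj) hu))

lemma maxErlangSurvival_nonneg (hd : ∀ j ∈ s, 0 ≤ d j) (hu : 0 ≤ u) :
    0 ≤ maxErlangSurvival m s d u :=
  sub_nonneg.2 <| Finset.prod_le_one
    (fun j hj => sub_nonneg.2 (erlangSurvival_le_one (mul_nonneg (hd j hj) hu)))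
    fun j hj => sub_le_self 1 (erlangSurvival_nonneg (mul_nonneg (hd j hj) hu))

lemma maxErlangSurvival_le_sum (hd : ∀ j ∈ s, 0 ≤ d j)
    (hC : ∀ y, 0 ≤ y → erlangSurvival m y ≤ C * Real.exp (-(k * y))) (hu : 0 ≤ u) :
    maxErlangSurvival m s d u ≤ ∑ j ∈ s, C * Real.exp (-(k * d j) * u) := by
  have hdu : ∀ j ∈ s, 0 ≤ d j * u := fun j hj => mul_nonneg (hd j hj) hu
  calc maxErlangSurvival m s d u
      ≤ ∑ j ∈ s, erlangSurvival m (d j * u) :=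
        one_sub_prod_one_sub_le_sum (fun j hj => erlangSurvival_nonneg (hdu j hj))
          fun j hj => erlangSurvival_le_one (hdu j hj)
    _ ≤ ∑ j ∈ s, C * Real.exp (-(k * (d j * u))) :=
        Finset.sum_le_sum fun j hj => hC _ (hdu j hj)
    _ = ∑ j ∈ s, C * Real.exp (-(k * d j) * u) := by simp only [neg_mul, mul_assoc]

lemma one_sub_exp_neg_sum_le_maxErlangSurvival (hm : 1 ≤ m) (hd : ∀ j ∈ s, 0 ≤ d j)
    (hu : 0 ≤ u) (huc : u ≤ c) :
    1 - Real.exp (-∑ j ∈ s, Real.exp (-(d j * c))) ≤ maxErlangSurvival m s d u := by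
  have hdu : ∀ j ∈ s, 0 ≤ d j * u := fun j hj => mul_nonneg (hd j hj) hu
  rw [← Finset.sum_neg_distrib, Real.exp_sum]
  refine sub_le_sub_left (Finset.prod_le_prod
    (fun j hj => sub_nonneg.2 (erlangSurvival_le_one (hdu j hj))) fun j hj => ?_) 1
  calc 1 - erlangSurvival m (d j * u)
      ≤ 1 - Real.exp (-(d j * u)) := by gcongr; exact exp_neg_le_erlangSurvival hm (hdu j hj)
    _ ≤ 1 - Real.exp (-(d j * c)) := by have := hd j hj; gcongr
    _ ≤ Real.exp (-Real.exp (-(d j * c))) := Real.one_sub_le_exp_neg _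

lemma integrableOn_const_mul_exp_neg_mul (hd : ∀ j ∈ s, 0 < d j) (hk : 0 < k) (C c : ℝ) :
    ∀ j ∈ s, IntegrableOn (fun u => C * Real.exp (-(k * d j) * u)) (Set.Ioi c) := fun j hj =>
  (integrableOn_exp_mul_Ioi (neg_neg_of_pos (mul_pos hk (hd j hj))) c).const_mul C

lemma integrableOn_maxErlangSurvival (hd : ∀ j ∈ s, 0 < d j) (hc : 0 ≤ c) :
    IntegrableOn (maxErlangSurvival m s d) (Set.Ioi c) := by
  obtain ⟨C, -, hC⟩ := exists_erlangSurvival_le m one_half_lt_one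
  have hd' : ∀ j ∈ s, 0 ≤ d j := fun j hj => (hd j hj).le
  refine Integrable.mono' (integrable_finsetSum _
      (integrableOn_const_mul_exp_neg_mul hd one_half_pos C c))
    continuous_maxErlangSurvival.aestronglyMeasurable ?_
  filter_upwards [ae_restrict_mem measurableSet_Ioi] with u hu
  have hu0 : 0 ≤ u := hc.trans (le_of_lt hu)
  rw [Real.norm_of_nonneg (maxErlangSurvival_nonneg hd' hu0)]
  exact maxErlangSurvival_le_sum hd' hC hu0

lemma setIntegral_Ioi_maxErlangSurvival_le (hd : ∀ j ∈ s, 0 < d j) (hk : 0 < k)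
    (hC : ∀ y, 0 ≤ y → erlangSurvival m y ≤ C * Real.exp (-(k * y))) (hc : 0 ≤ c) :
    ∫ u in Set.Ioi c, maxErlangSurvival m s d u ≤
      ∑ j ∈ s, C * (Real.exp (-(k * d j * c)) / (k * d j)) := by
  have hint := integrableOn_const_mul_exp_neg_mul hd hk C c
  calc ∫ u in Set.Ioi c, maxErlangSurvival m s d u
      ≤ ∫ u in Set.Ioi c, ∑ j ∈ s, C * Real.exp (-(k * d j) * u) :=
        setIntegral_mono_on (integrableOn_maxErlangSurvival hd hc) (integrable_finsetSum _ hint)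
          measurableSet_Ioi fun u hu => maxErlangSurvival_le_sum (fun j hj => (hd j hj).le) hC
            (hc.trans (le_of_lt hu))
    _ = ∑ j ∈ s, C * (Real.exp (-(k * d j * c)) / (k * d j)) := by
        rw [integral_finsetSum _ hint]
        refine Finset.sum_congr rfl fun j hj => ?_
        rw [integral_const_mul, integral_exp_mul_Ioi (neg_neg_of_pos (mul_pos hk (hd j hj))),
          neg_div_neg_eq, neg_mul]

lemma integral_maxErlangSurvival_eq_add (hd : ∀ j ∈ s, 0 < d j) (hc : 0 ≤ c) :
    ∫ u in Set.Ioi 0, maxErlangSurvival m s d u =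
      (∫ u in (0)..c, maxErlangSurvival m s d u) +
        ∫ u in Set.Ioi c, maxErlangSurvival m s d u :=
  (intervalIntegral.integral_interval_add_Ioi (integrableOn_maxErlangSurvival hd le_rfl)
    (integrableOn_maxErlangSurvival hd hc)).symm

lemma integral_maxErlangSurvival_le (hd : ∀ j ∈ s, 0 < d j) (hk : 0 < k)
    (hC : ∀ y, 0 ≤ y → erlangSurvival m y ≤ C * Real.exp (-(k * y))) (hc : 0 ≤ c) :
    ∫ u in Set.Ioi 0, maxErlangSurvival m s d u ≤
      c + ∑ j ∈ s, C * (Real.exp (-(k * d j * c)) / (k * d j)) := by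
  rw [integral_maxErlangSurvival_eq_add hd hc]
  refine add_le_add ?_ (setIntegral_Ioi_maxErlangSurvival_le hd hk hC hc)
  calc ∫ u in (0)..c, maxErlangSurvival m s d u
      ≤ ∫ _ in (0)..c, (1 : ℝ) :=
        intervalIntegral.integral_mono_on hc
          (continuous_maxErlangSurvival.intervalIntegrable 0 c) intervalIntegrable_const
          fun u hu => maxErlangSurvival_le_one (fun j hj => (hd j hj).le) hu.1
    _ = c := by simp

lemma le_integral_maxErlangSurvival (hm : 1 ≤ m) (hd : ∀ j ∈ s, 0 < d j) (hc : 0 ≤ c) :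
    c * (1 - Real.exp (-∑ j ∈ s, Real.exp (-(d j * c)))) ≤
      ∫ u in Set.Ioi 0, maxErlangSurvival m s d u := by
  have hd' : ∀ j ∈ s, 0 ≤ d j := fun j hj => (hd j hj).le
  rw [integral_maxErlangSurvival_eq_add hd hc]
  refine le_add_of_le_of_nonneg ?_ (setIntegral_nonneg measurableSet_Ioi fun u hu =>
    maxErlangSurvival_nonneg hd' (hc.trans (le_of_lt hu)))
  calc c * (1 - Real.exp (-∑ j ∈ s, Real.exp (-(d j * c))))
      = ∫ _ in (0)..c, (1 - Real.exp (-∑ j ∈ s, Real.exp (-(d j * c)))) := by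
        rw [intervalIntegral.integral_const, sub_zero, smul_eq_mul]
    _ ≤ ∫ u in (0)..c, maxErlangSurvival m s d u :=
        intervalIntegral.integral_mono_on hc intervalIntegrable_const
          (continuous_maxErlangSurvival.intervalIntegrable 0 c)
          fun u hu => one_sub_exp_neg_sum_le_maxErlangSurvival hm hd' hu.1 hu.2

end MaxErlang

section InvExpSum

/-- The sum `∑_{j=1}^M e^{-B/f(j)}`, the expected number of exponential variables of means `f j`,
`1 ≤ j ≤ M`, that exceed `B`. -/
noncomputable def invExpSum (f : ℝ → ℝ) (B : ℝ) (M : ℕ) : ℝ :=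
  ∑ j ∈ Finset.Icc 1 M, Real.exp (-(B / f j))

variable {m M : ℕ} {f : ℝ → ℝ} {d : ℕ → ℝ} {B C F k : ℝ}

lemma L1_eq_integral_maxErlangSurvival :
    L1 m d M = ∫ u in Set.Ioi 0, maxErlangSurvival m (Finset.Icc 1 M) d u := rfl

lemma L1_congr {d' : ℕ → ℝ} (h : ∀ j, 1 ≤ j → d j = d' j) : L1 m d M = L1 m d' M := by
  unfold L1
  congr! 5 with u j hj
  rw [h j (Finset.mem_Icc.1 hj).1]

lemma one_div_pos_of_mem_Icc (hpos : ∀ j : ℕ, 1 ≤ j → 0 < f j) :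
    ∀ j ∈ Finset.Icc 1 M, 0 < 1 / f j := fun j hj =>
  one_div_pos.2 (hpos j (Finset.mem_Icc.1 hj).1)

lemma le_L1_one_div (hm : 1 ≤ m) (hpos : ∀ j : ℕ, 1 ≤ j → 0 < f j) (hB : 0 ≤ B) :
    B * (1 - Real.exp (-invExpSum f B M)) ≤ L1 m (fun j => 1 / f j) M := by
  simpa only [L1_eq_integral_maxErlangSurvival, invExpSum, one_div_mul_eq_div]
    using le_integral_maxErlangSurvival hm (one_div_pos_of_mem_Icc hpos) hB

lemma L1_one_div_le (hpos : ∀ j : ℕ, 1 ≤ j → 0 < f j) (hF : ∀ j ∈ Finset.Icc 1 M, f j ≤ F)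
    (hk : 0 < k) (hC0 : 0 ≤ C)
    (hC : ∀ y, 0 ≤ y → erlangSurvival m y ≤ C * Real.exp (-(k * y))) (hB : 0 ≤ B) :
    L1 m (fun j => 1 / f j) M ≤ B + C * F / k * invExpSum f (k * B) M := by
  rw [L1_eq_integral_maxErlangSurvival, invExpSum, Finset.mul_sum]
  refine (integral_maxErlangSurvival_le (one_div_pos_of_mem_Icc hpos) hk hC hB).trans ?_
  refine (add_le_add_iff_left B).2 (Finset.sum_le_sum fun j hj => ?_)
  calc C * (Real.exp (-(k * (1 / f j) * B)) / (k * (1 / f j)))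
      = C * f j / k * Real.exp (-(k * B / f j)) := by
        have := hpos j (Finset.mem_Icc.1 hj).1
        field_simp
    _ ≤ C * F / k * Real.exp (-(k * B / f j)) := by gcongr; exact hF j hj

end InvExpSum

section Laplace

/-- The approximate primitive of `x ↦ e^{-B/f(x)}` that Laplace's method provides. -/
noncomputable def laplacePrimitive (f : ℝ → ℝ) (B x : ℝ) : ℝ :=
  f x ^ 2 / (deriv f x * B) * Real.exp (-(B / f x))

lemma tendsto_laplacePrimitive_atTop (f : ℝ → ℝ) {x : ℝ} (hx : 0 ≤ f x) :
    Tendsto (fun B => laplacePrimitive f B x) atTop (𝓝 0) := by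
  have prefactor : Tendsto (fun B => f x ^ 2 / (deriv f x * B)) atTop (𝓝 0) :=
    (tendsto_id.const_div_atTop (f x ^ 2 / deriv f x)).congr fun B => div_div _ _ B
  refine squeeze_zero_norm' ?_ (norm_zero (E := ℝ) ▸ prefactor.norm)
  filter_upwards [eventually_ge_atTop 0] with B hB
  rw [laplacePrimitive, norm_mul, Real.norm_of_nonneg (Real.exp_nonneg _)]
  exact mul_le_of_le_one_right (norm_nonneg _)
    (Real.exp_le_one_iff.2 (neg_nonpos.2 (div_nonneg hB hx)))

/-- Nonasymptotic form, on the half-line `[a, ∞)`, of the regularity conditions on `f`.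
The last field bounds the derivative of `x + f / f'` and thereby encodes condition (iii). -/
structure RegularFrom (f : ℝ → ℝ) (a K : ℝ) : Prop where
  pos : ∀ x, a ≤ x → 0 < f x
  deriv_pos : ∀ x, a ≤ x → 0 < deriv f x
  differentiableAt_deriv : ∀ x, a ≤ x → DifferentiableAt ℝ (deriv f) x
  abs_two_sub_le : ∀ x, a ≤ x → |2 - deriv (deriv f) x * f x / deriv f x ^ 2| ≤ K

lemma exists_regularFrom {f : ℝ → ℝ} (hpos : ∀ᶠ x in atTop, 0 < f x)
    (hderiv : ∀ᶠ x in atTop, 0 < deriv f x)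
    (hdiff : ∀ᶠ x in atTop, DifferentiableAt ℝ (deriv f) x)
    (hbdd : (fun x => deriv (deriv f) x * f x / deriv f x ^ 2) =O[atTop] (fun _ => (1 : ℝ))) :
    ∃ a : ℕ, 1 ≤ a ∧ ∃ K, RegularFrom f a K := by
  obtain ⟨C, hC⟩ := hbdd.bound
  obtain ⟨x₀, hx₀⟩ := eventually_atTop.1 (hpos.and (hderiv.and (hdiff.and hC)))
  obtain ⟨a, ha⟩ := exists_nat_ge (max x₀ 1)
  have hx (x : ℝ) (hx : a ≤ x) := hx₀ x ((le_max_left _ _).trans (ha.trans hx))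
  refine ⟨a, by exact_mod_cast (le_max_right x₀ 1).trans ha, 2 + C,
    fun x h => (hx x h).1, fun x h => (hx x h).2.1, fun x h => (hx x h).2.2.1, fun x h => ?_⟩
  have := (hx x h).2.2.2
  simp only [Real.norm_eq_abs, abs_one, mul_one] at this
  exact (abs_sub _ _).trans (by rw [abs_two]; gcongr)

namespace RegularFrom

variable {f : ℝ → ℝ} {a K : ℝ} {b x B : ℝ}

lemma differentiableAt (hf : RegularFrom f a K) (hx : a ≤ x) : DifferentiableAt ℝ f x :=
  differentiableAt_of_deriv_ne_zero (hf.deriv_pos x hx).ne'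

lemma monotoneOn (hf : RegularFrom f a K) : MonotoneOn f (Set.Ici a) :=
  (strictMonoOn_of_deriv_pos (convex_Ici a)
    (fun _ hx => (hf.differentiableAt hx).continuousAt.continuousWithinAt)
    fun x hx => hf.deriv_pos x (interior_subset hx)).monotoneOn

lemma continuousOn_exp_neg_div (hf : RegularFrom f a K) :
    ContinuousOn (fun x => Real.exp (-(B / f x))) (Set.Ici a) := fun x hx =>
  ((continuousAt_const.div (hf.differentiableAt hx).continuousAt
    (hf.pos x hx).ne').neg.rexp).continuousWithinAt

lemma monotoneOn_exp_neg_div (hf : RegularFrom f a K) (hB : 0 ≤ B) :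
    MonotoneOn (fun x => Real.exp (-(B / f x))) (Set.Ici a) := fun x hx y hy hxy => by
  have := hf.pos x hx
  have := hf.monotoneOn hx hy hxy
  dsimp only
  gcongr

lemma laplacePrimitive_nonneg (hf : RegularFrom f a K) (hB : 0 ≤ B) (hx : a ≤ x) :
    0 ≤ laplacePrimitive f B x := by
  have := hf.deriv_pos x hx
  unfold laplacePrimitive
  positivity

lemma hasDerivAt_laplacePrimitive (hf : RegularFrom f a K) (hB : B ≠ 0) (hx : a ≤ x) :
    HasDerivAt (laplacePrimitive f B) (Real.exp (-(B / f x)) *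
      (1 + f x * (2 - deriv (deriv f) x * f x / deriv f x ^ 2) / B)) x := by
  have hfx := (hf.pos x hx).ne'
  have hfx' := (hf.deriv_pos x hx).ne'
  have h₁ := (hf.differentiableAt hx).hasDerivAt
  have h₂ := (hf.differentiableAt_deriv x hx).hasDerivAt
  refine (((h₁.fun_pow 2).fun_div (h₂.mul_const B) (mul_ne_zero hfx' hB)).fun_mul
    (((hasDerivAt_const x B).fun_div h₁ hfx).fun_neg.exp)).congr_deriv ?_
  field_simp
  ring

lemma abs_relative_error_le (hf : RegularFrom f a K) (hB : 0 < B) (hKB : 2 * K * f b ≤ B)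
    (hx : x ∈ Set.Icc a b) :
    |f x * (2 - deriv (deriv f) x * f x / deriv f x ^ 2) / B| ≤ 1 / 2 := by
  have hfx := hf.pos x hx.1
  have hfb : f x ≤ f b := hf.monotoneOn hx.1 (hx.1.trans hx.2) hx.2
  rw [abs_div, abs_mul, abs_of_pos hfx, abs_of_pos hB, div_le_iff₀ hB]
  calc f x * |2 - deriv (deriv f) x * f x / deriv f x ^ 2| ≤ f b * K := by
        gcongr
        exacts [hfx.le.trans hfb, hf.abs_two_sub_le x hx.1]
    _ ≤ 1 / 2 * B := by linarith

lemma integral_exp_neg_div_le (hf : RegularFrom f a K) (hB : 0 < B) (hKB : 2 * K * f b ≤ B)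
    (hab : a ≤ b) :
    ∫ x in a..b, Real.exp (-(B / f x)) ≤
      2 * (laplacePrimitive f B b - laplacePrimitive f B a) := by
  have hderiv : ∀ x ∈ Set.Icc a b, HasDerivAt (laplacePrimitive f B) _ x :=
    fun x hx => hf.hasDerivAt_laplacePrimitive hB.ne' hx.1
  have hint : IntegrableOn (fun x => 1 / 2 * Real.exp (-(B / f x))) (Set.Icc a b) :=
    (continuousOn_const.mul (hf.continuousOn_exp_neg_div.mono
      Set.Icc_subset_Ici_self)).integrableOn_Icc
  have := intervalIntegral.integral_le_sub_of_hasDeriv_right_of_le hab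
    (fun x hx => (hderiv x hx).continuousAt.continuousWithinAt)
    (fun x hx => (hderiv x (Set.Ioo_subset_Icc_self hx)).hasDerivWithinAt) hint fun x hx => by
      rw [mul_comm]
      gcongr
      linarith [(abs_le.1
        (hf.abs_relative_error_le hB hKB (Set.Ioo_subset_Icc_self hx))).1]
  rw [intervalIntegral.integral_const_mul] at this
  linarith

lemma laplacePrimitive_sub_le (hf : RegularFrom f a K) (hB : 0 < B) (hKB : 2 * K * f b ≤ B)
    (hab : a ≤ b) :
    laplacePrimitive f B b - laplacePrimitive f B a ≤
      2 * ∫ x in a..b, Real.exp (-(B / f x)) := by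
  have hderiv : ∀ x ∈ Set.Icc a b, HasDerivAt (laplacePrimitive f B) _ x :=
    fun x hx => hf.hasDerivAt_laplacePrimitive hB.ne' hx.1
  have hint : IntegrableOn (fun x => 2 * Real.exp (-(B / f x))) (Set.Icc a b) :=
    (continuousOn_const.mul (hf.continuousOn_exp_neg_div.mono
      Set.Icc_subset_Ici_self)).integrableOn_Icc
  rw [← intervalIntegral.integral_const_mul]
  exact intervalIntegral.sub_le_integral_of_hasDeriv_right_of_le hab
    (fun x hx => (hderiv x hx).continuousAt.continuousWithinAt)
    (fun x hx => (hderiv x (Set.Ioo_subset_Icc_self hx)).hasDerivWithinAt) hint fun x hx => by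
      rw [mul_comm]
      gcongr
      linarith [(abs_le.1
        (hf.abs_relative_error_le hB hKB (Set.Ioo_subset_Icc_self hx))).2]

end RegularFrom

end Laplace

namespace RegularFrom

variable {f : ℝ → ℝ} {a M : ℕ} {K B : ℝ}

lemma invExpSum_le (hf : RegularFrom f a K) (hpos : ∀ j : ℕ, 1 ≤ j → 0 < f j) (ha : 1 ≤ a)
    (hB : 0 < B) (hKB : 2 * K * f M ≤ B) (haM : a ≤ M) :
    invExpSum f B M ≤ a + 2 * laplacePrimitive f B M := by
  have term_le_one (j : ℕ) (hj : 1 ≤ j) : Real.exp (-(B / f j)) ≤ 1 :=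
    Real.exp_le_one_iff.2 (neg_nonpos.2 (div_nonneg hB.le (hpos j hj).le))
  have head : ∑ j ∈ Finset.Ico 1 a, Real.exp (-(B / f j)) ≤ a - 1 := by
    simpa [Nat.cast_sub ha] using Finset.sum_le_card_nsmul (Finset.Ico 1 a) _ 1
      fun j hj => term_le_one j (Finset.mem_Ico.1 hj).1
  have middle : ∑ j ∈ Finset.Ico a M, Real.exp (-(B / f j)) ≤ 2 * laplacePrimitive f B M :=
    calc ∑ j ∈ Finset.Ico a M, Real.exp (-(B / f j))
        ≤ ∫ x in a..M, Real.exp (-(B / f x)) :=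
          ((hf.monotoneOn_exp_neg_div hB.le).mono Set.Icc_subset_Ici_self).sum_le_integral_Ico haM
      _ ≤ 2 * (laplacePrimitive f B M - laplacePrimitive f B a) :=
          hf.integral_exp_neg_div_le hB hKB (by exact_mod_cast haM)
      _ ≤ 2 * laplacePrimitive f B M := by
          linarith [hf.laplacePrimitive_nonneg hB.le le_rfl]
  have split : invExpSum f B M = ∑ j ∈ Finset.Ico 1 a, Real.exp (-(B / f j)) +
      ∑ j ∈ Finset.Ico a M, Real.exp (-(B / f j)) + Real.exp (-(B / f M)) := by
    rw [Finset.sum_Ico_consecutive _ ha haM, ← Finset.sum_Ico_succ_top (ha.trans haM)]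
    rfl
  linarith [term_le_one M (ha.trans haM)]

lemma le_invExpSum (hf : RegularFrom f a K) (hB : 0 < B) (hKB : 2 * K * f M ≤ B)
    (haM : a ≤ M) :
    (laplacePrimitive f B M - laplacePrimitive f B a) / 2 ≤ invExpSum f B M := by
  rw [div_le_iff₀' two_pos]
  calc laplacePrimitive f B M - laplacePrimitive f B a
      ≤ 2 * ∫ x in a..M, Real.exp (-(B / f x)) :=
        hf.laplacePrimitive_sub_le hB hKB (by exact_mod_cast haM)
    _ ≤ 2 * ∑ j ∈ Finset.Ico a M, Real.exp (-(B / f (j + 1 : ℕ))) := by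
        gcongr
        exact ((hf.monotoneOn_exp_neg_div hB.le).mono
          Set.Icc_subset_Ici_self).integral_le_sum_Ico haM
    _ = 2 * ∑ j ∈ Finset.Ico (a + 1) (M + 1), Real.exp (-(B / f j)) := by
        rw [Finset.sum_Ico_add' (fun j : ℕ => Real.exp (-(B / f j)))]
    _ ≤ 2 * invExpSum f B M := by
        gcongr
        exact Finset.sum_le_sum_of_subset_of_nonneg
          (Finset.Ico_subset_Ico_left (Nat.le_add_left 1 a)) fun _ _ _ => Real.exp_nonneg _

lemma eventually_forall_le (hf : RegularFrom f a K) (hfi : Tendsto (fun M : ℕ => f M) atTop atTop) :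
    ∀ᶠ M : ℕ in atTop, ∀ j ∈ Finset.Icc 1 M, f j ≤ f M := by
  have head : ∀ᶠ M : ℕ in atTop, ∀ j ∈ Finset.range a, f j ≤ f M :=
    (eventually_all_finset _).2 fun j _ => hfi.eventually_ge_atTop (f j)
  filter_upwards [head] with M hM j hj
  rcases lt_or_ge j a with hja | haj
  · exact hM j (Finset.mem_range.2 hja)
  · have hjM := (Finset.mem_Icc.1 hj).2
    have haj' : (a : ℝ) ≤ j := Nat.cast_le.2 haj
    have hjM' : (j : ℝ) ≤ M := Nat.cast_le.2 hjM
    exact hf.monotoneOn haj' (haj'.trans hjM') hjM'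

end RegularFrom

section LogScale

/-- The logarithmic factor `λ(x) = ln (f(x) / f'(x))` of the asymptotics. -/
noncomputable def logScale (f : ℝ → ℝ) (x : ℝ) : ℝ := Real.log (f x / deriv f x)

variable {f : ℝ → ℝ} {c : ℝ}

lemma tendsto_logScale (hpos : ∀ᶠ x in atTop, 0 < f x) (hderiv : ∀ᶠ x in atTop, 0 < deriv f x)
    (hfii : Tendsto (fun x => deriv f x / f x) atTop (𝓝 0)) :
    Tendsto (logScale f) atTop atTop := by
  have hfii' : Tendsto (fun x => deriv f x / f x) atTop (𝓝[>] 0) :=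
    tendsto_nhdsWithin_iff.2 ⟨hfii, (hpos.and hderiv).mono fun x hx => div_pos hx.2 hx.1⟩
  refine Real.tendsto_log_atTop.comp (hfii'.inv_tendsto_nhdsGT_zero.congr fun x => ?_)
  rw [Pi.inv_apply, inv_div]

lemma laplacePrimitive_mul_logScale {x : ℝ} (hfx : 0 < f x) (hfx' : 0 < deriv f x) :
    laplacePrimitive f (c * logScale f x * f x) x =
      Real.exp ((1 - c) * logScale f x) / (c * logScale f x) := by
  have exp_logScale : Real.exp (logScale f x) = f x / deriv f x :=
    Real.exp_log (div_pos hfx hfx')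
  rw [laplacePrimitive, mul_div_cancel_right₀ _ hfx.ne', one_sub_mul, sub_eq_add_neg,
    Real.exp_add, exp_logScale]
  field_simp

end LogScale

namespace RegularFrom

variable {f : ℝ → ℝ} {a m : ℕ} {K b c : ℝ}

lemma eventually_cutoff (hf : RegularFrom f a K)
    (hlog : Tendsto (fun M : ℕ => logScale f M) atTop atTop) (hc : 0 < c) :
    ∀ᶠ M : ℕ in atTop, a ≤ M ∧ 0 < c * logScale f M * f M ∧
      2 * K * f M ≤ c * logScale f M * f M := by
  have hlogc := hlog.const_mul_atTop hc
  filter_upwards [eventually_ge_atTop a, hlogc.eventually_gt_atTop 0,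
    hlogc.eventually_ge_atTop (2 * K)] with M haM hpos hK
  have hfM := hf.pos M (Nat.cast_le.2 haM)
  exact ⟨haM, mul_pos hpos hfM, mul_le_mul_of_nonneg_right hK hfM.le⟩

lemma eventually_laplacePrimitive_eq (hf : RegularFrom f a K) (c : ℝ) :
    ∀ᶠ M : ℕ in atTop, laplacePrimitive f (c * logScale f M * f M) M =
      Real.exp ((1 - c) * logScale f M) / (c * logScale f M) := by
  filter_upwards [eventually_ge_atTop a] with M haM
  have haM' : (a : ℝ) ≤ M := Nat.cast_le.2 haM
  exact laplacePrimitive_mul_logScale (hf.pos M haM') (hf.deriv_pos M haM')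

lemma tendsto_invExpSum_atTop (hf : RegularFrom f a K)
    (hfi : Tendsto (fun M : ℕ => f M) atTop atTop)
    (hlog : Tendsto (fun M : ℕ => logScale f M) atTop atTop) (hc0 : 0 < c) (hc1 : c < 1) :
    Tendsto (fun M : ℕ => invExpSum f (c * logScale f M * f M) M) atTop atTop := by
  have primitive_at_M : Tendsto (fun M : ℕ => laplacePrimitive f (c * logScale f M * f M) M)
      atTop atTop := by
    have exp_div : Tendsto (fun l : ℝ => Real.exp ((1 - c) * l) / (c * l)) atTop atTop := by
      refine ((tendsto_exp_mul_div_rpow_atTop 1 (1 - c) (sub_pos.2 hc1)).atTop_div_const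
        hc0).congr fun l => ?_
      rw [Real.rpow_one, div_div, mul_comm l]
    exact (exp_div.comp hlog).congr' ((hf.eventually_laplacePrimitive_eq c).mono fun _ => Eq.symm)
  have primitive_at_a : Tendsto (fun M : ℕ => laplacePrimitive f (c * logScale f M * f M) a)
      atTop (𝓝 0) :=
    (tendsto_laplacePrimitive_atTop f (hf.pos a le_rfl).le).comp
      ((hlog.const_mul_atTop hc0).atTop_mul_atTop₀ hfi)
  refine tendsto_atTop_mono' _ ?_
    ((primitive_at_M.atTop_add primitive_at_a.neg).atTop_div_const two_pos)
  filter_upwards [hf.eventually_cutoff hlog hc0] with M ⟨haM, hB, hKB⟩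
  exact hf.le_invExpSum hB hKB haM

lemma eventually_invExpSum_le (hf : RegularFrom f a K) (hpos : ∀ j : ℕ, 1 ≤ j → 0 < f j)
    (ha : 1 ≤ a) (hlog : Tendsto (fun M : ℕ => logScale f M) atTop atTop) (hc : 1 < c) :
    ∀ᶠ M : ℕ in atTop, invExpSum f (c * logScale f M * f M) M ≤ a + 2 := by
  have hc0 : 0 < c := one_pos.trans hc
  have hlogc := hlog.const_mul_atTop hc0
  filter_upwards [hf.eventually_cutoff hlog hc0, hf.eventually_laplacePrimitive_eq c,
    hlogc.eventually_ge_atTop 1] with M ⟨haM, hB, hKB⟩ hG hlogM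
  have hlogM0 : 0 ≤ logScale f M := (pos_of_mul_pos_right (one_pos.trans_le hlogM) hc0.le).le
  have hG1 : laplacePrimitive f (c * logScale f M * f M) M ≤ 1 := by
    rw [hG, div_le_one (one_pos.trans_le hlogM)]
    exact (Real.exp_le_one_iff.2
      (mul_nonpos_of_nonpos_of_nonneg (sub_nonpos.2 hc.le) hlogM0)).trans hlogM
  linarith [hf.invExpSum_le hpos ha hB hKB haM]

lemma eventually_lt_L1_div (hf : RegularFrom f a K) (hpos : ∀ j : ℕ, 1 ≤ j → 0 < f j)
    (hm : 1 ≤ m) (hfi : Tendsto (fun M : ℕ => f M) atTop atTop)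
    (hlog : Tendsto (fun M : ℕ => logScale f M) atTop atTop) (hb : b < 1) :
    ∀ᶠ M : ℕ in atTop, b < L1 m (fun j => 1 / f j) M / (f M * logScale f M) := by
  obtain ⟨c, hbc, hc1⟩ := exists_between (max_lt hb one_pos)
  obtain ⟨hbc, hc0⟩ := max_lt_iff.1 hbc
  have lower_tendsto : Tendsto
      (fun M : ℕ => c * (1 - Real.exp (-invExpSum f (c * logScale f M * f M) M)))
      atTop (𝓝 c) := by
    simpa using ((Real.tendsto_exp_neg_atTop_nhds_zero.comp
      (hf.tendsto_invExpSum_atTop hfi hlog hc0 hc1)).const_sub 1).const_mul c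
  filter_upwards [lower_tendsto.eventually_const_lt hbc, hf.eventually_cutoff hlog hc0]
    with M hM ⟨_, hB, _⟩
  have hscale : 0 < f M * logScale f M := by
    rw [mul_comm]
    exact pos_of_mul_pos_right (by rwa [← mul_assoc]) hc0.le
  refine hM.trans_le ((le_div_iff₀ hscale).2 ?_)
  calc c * (1 - Real.exp (-invExpSum f (c * logScale f M * f M) M)) * (f M * logScale f M)
      = c * logScale f M * f M *
          (1 - Real.exp (-invExpSum f (c * logScale f M * f M) M)) := by ring
    _ ≤ L1 m (fun j => 1 / f j) M := le_L1_one_div hm hpos hB.le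

lemma eventually_L1_div_lt (hf : RegularFrom f a K) (hpos : ∀ j : ℕ, 1 ≤ j → 0 < f j)
    (ha : 1 ≤ a) (m : ℕ) (hfi : Tendsto (fun M : ℕ => f M) atTop atTop)
    (hlog : Tendsto (fun M : ℕ => logScale f M) atTop atTop) (hb : 1 < b) :
    ∀ᶠ M : ℕ in atTop, L1 m (fun j => 1 / f j) M / (f M * logScale f M) < b := by
  -- The cutoff `c² λ f(M)` leaves a factor `c` to spend on the polynomial part of the tail.
  obtain ⟨c, hc1, hcb⟩ := exists_between (Real.lt_sqrt_of_sq_lt (by linarith : (1 : ℝ) ^ 2 < b))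
  have hc0 : 0 < c := one_pos.trans hc1
  replace hcb : c ^ 2 < b := (Real.lt_sqrt hc0.le).1 hcb
  obtain ⟨C, hC0, hC⟩ := exists_erlangSurvival_le m (inv_lt_one_of_one_lt₀ hc1)
  have upper_tendsto : Tendsto (fun M : ℕ => c ^ 2 + C * c * (a + 2) / logScale f M)
      atTop (𝓝 (c ^ 2)) := by
    simpa using (hlog.const_div_atTop (C * c * (a + 2))).const_add (c ^ 2)
  filter_upwards [upper_tendsto.eventually_lt_const hcb, hf.eventually_forall_le hfi,
    hf.eventually_invExpSum_le hpos ha hlog hc1, eventually_ge_atTop a,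
    hlog.eventually_gt_atTop 0]
    with M hM hle hsum haM (hlogM : 0 < logScale f M)
  have hfM : 0 < f M := hf.pos M (Nat.cast_le.2 haM)
  refine lt_of_le_of_lt ((div_le_iff₀ (by positivity)).2 ?_) hM
  calc L1 m (fun j => 1 / f j) M
      ≤ c ^ 2 * logScale f M * f M +
          C * f M / c⁻¹ * invExpSum f (c⁻¹ * (c ^ 2 * logScale f M * f M)) M :=
        L1_one_div_le hpos hle (inv_pos.2 hc0) hC0 hC (by positivity)
    _ = c ^ 2 * logScale f M * f M +
          C * f M * c * invExpSum f (c * logScale f M * f M) M := by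
        congr 2
        · rw [div_inv_eq_mul]
        · congr 1; field_simp
    _ ≤ c ^ 2 * logScale f M * f M + C * f M * c * (a + 2) := by gcongr
    _ = (c ^ 2 + C * c * (a + 2) / logScale f M) * (f M * logScale f M) := by field_simp

end RegularFrom

theorem L1_asymptotics_general
    (m : ℕ) (hm : 1 ≤ m) (f : ℝ → ℝ) (hfpos : ∀ j : ℕ, 1 ≤ j → 0 < f j)
    (hf'pos : ∀ᶠ x in atTop, 0 < deriv f x)
    (hfdiff2 : ∀ᶠ x in atTop, DifferentiableAt ℝ (deriv f) x)
    (hfi : Tendsto f atTop atTop)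
    (hfii : Tendsto (fun x => deriv f x / f x) atTop (𝓝 0))
    (hfiii : (fun x => deriv (deriv f) x * f x / (deriv f x) ^ 2) =O[atTop]
      (fun _ => (1 : ℝ)))
    (d : ℕ → ℝ) (hd : ∀ j, 1 ≤ j → d j = 1 / f j) :
    Tendsto (fun M : ℕ => L1 m d M / (f M * Real.log (f M / deriv f M))) atTop (𝓝 1) := by
  have hpos := hfi.eventually_gt_atTop 0
  have hlog := (tendsto_logScale hpos hf'pos hfii).comp (tendsto_natCast_atTop_atTop (R := ℝ))
  have hfN := hfi.comp (tendsto_natCast_atTop_atTop (R := ℝ))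
  obtain ⟨a, ha, K, hf⟩ := exists_regularFrom hpos hf'pos hfdiff2 hfiii
  simp only [L1_congr hd]
  exact tendsto_order.2 ⟨fun b hb => hf.eventually_lt_L1_div hfpos hm hfN hlog hb,
    fun b hb => hf.eventually_L1_div_lt hfpos ha m hfN hlog hb⟩

theorem L1_asymptotics
    (m : ℕ) (hm : 1 ≤ m)
    (f : ℝ → ℝ)
    (hfpos : ∀ x > (0 : ℝ), 0 < f x)
    (hf'pos : ∀ x > (0 : ℝ), 0 < deriv f x)
    (hfdiff : ∀ x > (0 : ℝ), DifferentiableAt ℝ f x)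
    (hfdiff2 : ∀ x > (0 : ℝ), DifferentiableAt ℝ (deriv f) x)
    (hfdiff3 : ∀ x > (0 : ℝ), DifferentiableAt ℝ (deriv (deriv f)) x)
    (hfi : Tendsto f atTop atTop)
    (hfii : Tendsto (fun x => deriv f x / f x) atTop (nhds 0))
    (hfiii : (fun x => deriv (deriv f) x * f x / (deriv f x) ^ 2) =O[atTop]
      (fun _ => (1 : ℝ)))
    (hfiv : (fun x => deriv (deriv (deriv f)) x * (f x) ^ 2 / (deriv f x) ^ 3) =O[atTop]
      (fun _ => (1 : ℝ)))
    (d : ℕ → ℝ) (hd : ∀ j, 1 ≤ j → d j = 1 / f j) :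
    Tendsto (fun M : ℕ =>
        L1 m d M / (f M * Real.log (f M / deriv f M))) atTop (nhds 1) := by
  have hpos := eventually_gt_atTop (0 : ℝ)
  exact L1_asymptotics_general m hm f (fun j hj => hfpos j (Nat.cast_pos.2 hj))
    (hpos.mono hf'pos) (hpos.mono hfdiff2) hfi hfii hfiii d hd
end

section
/- (Schur concavity of h.) Let m ≥ 1 be an integer and t > 0 be fixed, and define h(b_1,…,b_M) = ∑_{j=1}^M ln(1 − S_m(b_j t) e^{−b_j t}) for b_1,…,b_M > 0. Then for all i ≠ j, (b_i − b_j)(∂h/∂b_i − ∂h/∂b_j) ≤ 0; equivalently, the function y ↦ ln(1 − S_m(y t) e^{−y t}) is concave on (0,∞), so h is a Schur concave symmetric function and attains its maximum on any simplex {b_j > 0 : ∑ b_j = S} when all b_j are equal. -/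
open Filter

/-!
Read `1 - S_m(y) e^{-y}` as the probability that a Poisson variable of mean `y` is at least `m`.
Its derivative in `y` telescopes to the single Poisson weight `e^{-y} y^k / k!` with `k = m - 1`, so
the derivative of its logarithm is the ratio of this weight to the tail `∑_{n ≥ m} e^{-y} y^n / n!`.
Poisson weights have monotone likelihood ratio in the mean: as `y` grows, every weight of the tail
grows relative to the `k`-th one. Hence the logarithmic derivative decreases.
-/

open Real Set

theorem sub_mul_deriv_sub_deriv_nonpos_of_concaveOn {s : Set ℝ} {f : ℝ → ℝ}
    (hf : ConcaveOn ℝ s f) (hdiff : ∀ x ∈ s, DifferentiableAt ℝ f x) {x y : ℝ} (hx : x ∈ s)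
    (hy : y ∈ s) :
    (x - y) * (deriv f x - deriv f y) ≤ 0 := by
  have hanti : AntivaryOn id (deriv f) s :=
    ((hf.antitoneOn_deriv hdiff).antivaryOn monotoneOn_id).symm
  exact hanti.sub_mul_sub_nonpos hy hx

theorem concaveOn_Ioi_zero_comp_mul_const {f : ℝ → ℝ} (hf : ConcaveOn ℝ (Ioi 0) f) {c : ℝ}
    (hc : 0 < c) : ConcaveOn ℝ (Ioi 0) (fun x ↦ f (x * c)) := by
  have hpreimage : LinearMap.mulRight ℝ c ⁻¹' Ioi 0 = Ioi 0 :=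
    (preimage_mul_const_Ioi₀ 0 hc).trans (by rw [zero_div])
  exact hpreimage ▸ hf.comp_linearMap (LinearMap.mulRight ℝ c)

theorem sum_le_card_mul_map_average_of_concaveOn {E ι : Type*} [AddCommGroup E] [Module ℝ E]
    {s : Set E} {f : E → ℝ} (hf : ConcaveOn ℝ s f) {I : Finset ι} (hI : I.Nonempty) {b : ι → E}
    (hb : ∀ i ∈ I, b i ∈ s) :
    ∑ i ∈ I, f (b i) ≤ I.card * f ((I.card : ℝ)⁻¹ • ∑ i ∈ I, b i) := by
  have hcard : (0 : ℝ) < I.card := Nat.cast_pos.2 hI.card_pos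
  have hjensen := hf.le_map_sum (t := I) (w := fun _ ↦ (I.card : ℝ)⁻¹) (p := b)
    (fun _ _ ↦ by positivity) (by simp [hcard.ne']) hb
  rwa [← Finset.smul_sum, ← Finset.smul_sum, smul_eq_mul, inv_mul_le_iff₀ hcard] at hjensen

/-- The probability `e^{-y} y^n / n!` that a Poisson variable of mean `y` equals `n`, for an
arbitrary real `y` so that it can be differentiated in the mean (Mathlib's
`ProbabilityTheory.poissonPMFReal` takes a mean in `ℝ≥0`). -/
noncomputable def poissonWeight (n : ℕ) (y : ℝ) : ℝ := exp (-y) * y ^ n / n.factorial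

/-- The probability that a Poisson variable of mean `y` is at least `m`, written as the complement
of the first `m` weights and, like `poissonWeight`, for an arbitrary real `y`. -/
noncomputable def poissonTail (m : ℕ) (y : ℝ) : ℝ := 1 - Sm m y * exp (-y)

theorem poissonWeight_pos (n : ℕ) {y : ℝ} (hy : 0 < y) : 0 < poissonWeight n y := by
  unfold poissonWeight
  positivity

theorem hasDerivAt_poissonWeight_succ (n : ℕ) (y : ℝ) :
    HasDerivAt (poissonWeight (n + 1)) (poissonWeight n y - poissonWeight (n + 1) y) y := by
  have hexp : HasDerivAt (fun z ↦ exp (-z)) (-exp (-y)) y := by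
    simpa using (hasDerivAt_neg y).exp
  refine ((hexp.mul (hasDerivAt_pow (n + 1) y)).div_const _).congr_deriv ?_
  simp only [poissonWeight, Nat.factorial_succ, Nat.cast_mul, Nat.cast_succ, Nat.add_sub_cancel]
  field_simp
  ring

theorem poissonWeight_mul_poissonWeight_le {k n : ℕ} (hkn : k ≤ n) {x y : ℝ} (hx : 0 ≤ x)
    (hxy : x ≤ y) :
    poissonWeight k y * poissonWeight n x ≤ poissonWeight k x * poissonWeight n y := by
  obtain ⟨d, rfl⟩ := Nat.exists_eq_add_of_le hkn
  have hy : 0 ≤ y := hx.trans hxy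
  calc poissonWeight k y * poissonWeight (k + d) x
      = exp (-x) * exp (-y) * (x * y) ^ k / (k.factorial * (k + d).factorial) * x ^ d := by
        simp only [poissonWeight]
        ring
    _ ≤ exp (-x) * exp (-y) * (x * y) ^ k / (k.factorial * (k + d).factorial) * y ^ d := by
        gcongr
    _ = poissonWeight k x * poissonWeight (k + d) y := by
        simp only [poissonWeight]
        ring

theorem poissonTail_zero (y : ℝ) : poissonTail 0 y = 1 := by
  simp [poissonTail, Sm]

theorem poissonTail_succ (m : ℕ) (y : ℝ) :
    poissonTail (m + 1) y = poissonTail m y - poissonWeight m y := by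
  simp only [poissonTail, poissonWeight, Sm, Finset.sum_range_succ]
  ring

theorem hasSum_poissonWeight_add (m : ℕ) (y : ℝ) :
    HasSum (fun n ↦ poissonWeight (n + m) y) (poissonTail m y) := by
  have htotal : HasSum (fun n ↦ poissonWeight n y) 1 := by
    have hexp := (NormedSpace.expSeries_div_hasSum_exp y).mul_left (exp (-y))
    rw [← exp_eq_exp_ℝ, ← exp_add, neg_add_cancel, exp_zero] at hexp
    simpa only [poissonWeight, mul_div_assoc] using hexp
  have hhead : ∑ n ∈ Finset.range m, poissonWeight n y = Sm m y * exp (-y) := by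
    simp only [poissonWeight, Sm, Finset.sum_mul]
    exact Finset.sum_congr rfl fun n _ ↦ by ring
  simpa only [poissonTail, hhead] using (hasSum_nat_add_iff' m).2 htotal

theorem poissonTail_pos (m : ℕ) {y : ℝ} (hy : 0 < y) : 0 < poissonTail m y :=
  (poissonWeight_pos (0 + m) hy).trans_le <|
    le_hasSum (hasSum_poissonWeight_add m y) 0 fun n _ ↦ (poissonWeight_pos (n + m) hy).le

theorem hasDerivAt_poissonTail_succ (k : ℕ) (y : ℝ) :
    HasDerivAt (poissonTail (k + 1)) (poissonWeight k y) y := by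
  induction k with
  | zero =>
    have htail : poissonTail (0 + 1) = fun z ↦ 1 - exp (-z) := by
      funext z
      simp [poissonTail, Sm]
    simpa [htail, poissonWeight] using (hasDerivAt_neg y).exp.const_sub 1
  | succ k ih =>
    have htail : poissonTail (k + 1 + 1) = poissonTail (k + 1) - poissonWeight (k + 1) :=
      funext (poissonTail_succ (k + 1))
    rw [htail]
    exact (ih.sub (hasDerivAt_poissonWeight_succ k y)).congr_deriv (sub_sub_cancel _ _)

theorem differentiable_poissonTail (m : ℕ) : Differentiable ℝ (poissonTail m) := by
  unfold poissonTail Sm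
  fun_prop

theorem antitoneOn_poissonWeight_div_poissonTail {k m : ℕ} (hkm : k ≤ m) :
    AntitoneOn (fun y ↦ poissonWeight k y / poissonTail m y) (Ioi 0) := by
  intro x hx y hy hxy
  refine (div_le_div_iff₀ (poissonTail_pos m hy) (poissonTail_pos m hx)).2 ?_
  exact hasSum_le
    (fun n ↦ poissonWeight_mul_poissonWeight_le (le_add_left hkm) (le_of_lt hx) hxy)
    ((hasSum_poissonWeight_add m x).mul_left (poissonWeight k y))
    ((hasSum_poissonWeight_add m y).mul_left (poissonWeight k x))

theorem differentiableAt_log_poissonTail (m : ℕ) {y : ℝ} (hy : 0 < y) :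
    DifferentiableAt ℝ (fun z ↦ log (poissonTail m z)) y :=
  (differentiable_poissonTail m y).log (poissonTail_pos m hy).ne'

theorem concaveOn_log_poissonTail (m : ℕ) :
    ConcaveOn ℝ (Ioi 0) (fun y ↦ log (poissonTail m y)) := by
  cases m with
  | zero => simpa only [poissonTail_zero] using concaveOn_const (log 1) (convex_Ioi 0)
  | succ k =>
    have hderiv : ∀ y ∈ Ioi (0 : ℝ), deriv (fun z ↦ log (poissonTail (k + 1) z)) y =
        poissonWeight k y / poissonTail (k + 1) y := fun y hy ↦
      ((hasDerivAt_poissonTail_succ k y).log (poissonTail_pos (k + 1) hy).ne').deriv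
    have hdiff : DifferentiableOn ℝ (fun z ↦ log (poissonTail (k + 1) z)) (Ioi 0) := fun y hy ↦
      (differentiableAt_log_poissonTail (k + 1) hy).differentiableWithinAt
    refine AntitoneOn.concaveOn_of_deriv (convex_Ioi 0) hdiff.continuousOn ?_ ?_ <;>
      rw [interior_Ioi]
    · exact hdiff
    · exact (antitoneOn_poissonWeight_div_poissonTail k.le_succ).congr fun y hy ↦ (hderiv y hy).symm

theorem schur_concave_h
    (m : ℕ) (hm : 1 ≤ m) (t : ℝ) (ht : 0 < t) :
    -- derivative condition: `(b_i − b_j)(∂h/∂b_i − ∂h/∂b_j) ≤ 0`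
    (∀ x y : ℝ, 0 < x → 0 < y →
      (x - y) *
        (deriv (fun z => Real.log (1 - Sm m (z * t) * Real.exp (-(z * t)))) x -
         deriv (fun z => Real.log (1 - Sm m (z * t) * Real.exp (-(z * t)))) y) ≤ 0) ∧
    -- equivalently, `y ↦ ln(1 − S_m(yt) e^{−yt})` is concave on `(0, ∞)`
    ConcaveOn ℝ (Set.Ioi (0 : ℝ))
      (fun z => Real.log (1 - Sm m (z * t) * Real.exp (-(z * t)))) ∧
    -- hence `h` attains its maximum on the simplex `{b_j > 0 : ∑ b_j = S}`
    -- when all the `b_j` are equal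
    (∀ M : ℕ, 1 ≤ M → ∀ S : ℝ, 0 < S → ∀ b : ℕ → ℝ, (∀ j, 1 ≤ j → 0 < b j) →
      (∑ j ∈ Finset.Icc 1 M, b j = S) →
      ∑ j ∈ Finset.Icc 1 M, Real.log (1 - Sm m (b j * t) * Real.exp (-(b j * t)))
        ≤ M * Real.log (1 - Sm m ((S / M) * t) * Real.exp (-((S / M) * t)))) := by
  have hconc : ConcaveOn ℝ (Ioi 0) (fun z ↦ log (poissonTail m (z * t))) :=
    concaveOn_Ioi_zero_comp_mul_const (concaveOn_log_poissonTail m) ht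
  have hdiff : ∀ x ∈ Ioi (0 : ℝ), DifferentiableAt ℝ (fun z ↦ log (poissonTail m (z * t))) x :=
    fun x hx ↦ DifferentiableAt.comp (g := fun y ↦ log (poissonTail m y)) x
      (differentiableAt_log_poissonTail m (mul_pos hx ht)) (differentiableAt_id.mul_const t)
  refine ⟨fun x y hx hy ↦ sub_mul_deriv_sub_deriv_nonpos_of_concaveOn hconc hdiff hx hy, hconc, ?_⟩
  rintro M hM S - b hb rfl
  simpa only [Nat.card_Icc, Nat.add_sub_cancel, smul_eq_mul, inv_mul_eq_div, poissonTail]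
    using sum_le_card_mul_map_average_of_concaveOn hconc (Finset.nonempty_Icc.2 hM)
      fun j hj ↦ hb j (Finset.mem_Icc.1 hj).1
end
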